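/- arXiv:2404.06045 — 4 statements merged into one kernel-verified Lean document; each statement's English description precedes it below -/
import Mathlib

section
/- Let k be an algebraically closed field of characteristic zero, let g be a finite-dimensional simple Lie algebra over k, and let A be a commutative associative unital k-algebra. Then every element z of the current Lie algebra g ⊗ A can be written as a sum of two Lie brackets: there exist x₁, y₁, x₂, y₂ ∈ g ⊗ A such that z = [x₁, y₁] + [x₂, y₂]. (In particular the bracket width of g ⊗ A is at most 2.) -/
open scoped TensorProduct

/-!
A split Lie algebra `L` with non-degenerate Killing form is already the sum of the images of two
inner derivations `ad a` and `ad b`. Take `a` in a splitting Cartan subalgebra `H`, off every root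
hyperplane: `ad a` is invertible on each root space, so its image contains them all. Take
`b = ∑ e_α` with `e_α` a root vector for each root `α`: if `f_α` is an opposite root vector with
`⁅e_α, f_α⁆` the coroot of `α`, then `⁅b, f_α⁆` is that coroot up to root vectors, and the coroots
span `H`. The two maps `ad a` and `ad b` are linear, so the equality of `L` with the sum of their
images survives extension of scalars to `A`.
-/

section BaseChange

variable {R : Type*} [CommRing R]

theorem exists_eq_baseChange_add_baseChange
    {M N P : Type*} [AddCommGroup M] [Module R M] [AddCommGroup N] [Module R N]
    [AddCommGroup P] [Module R P] {f : M →ₗ[R] P} {g : N →ₗ[R] P} (hfg : f.range ⊔ g.range = ⊤)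
    (A : Type*) [Ring A] [Algebra R A] (z : A ⊗[R] P) :
    ∃ u v, z = f.baseChange A u + g.baseChange A v := by
  have hsurj : Function.Surjective (f.coprod g) := by
    rw [← LinearMap.range_eq_top, LinearMap.range_coprod, hfg]
  obtain ⟨w, rfl⟩ := LinearMap.baseChange_surjective A hsurj z
  refine ⟨(LinearMap.fst R M N).baseChange A w, (LinearMap.snd R M N).baseChange A w, ?_⟩
  simp only [LinearMap.coprod, LinearMap.baseChange_add, LinearMap.baseChange_comp,
    LinearMap.add_apply, LinearMap.comp_apply]

theorem exists_eq_one_tmul_lie_add_one_tmul_lie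
    {L M : Type*} [LieRing L] [LieAlgebra R L] [AddCommGroup M] [Module R M] [LieRingModule L M]
    [LieModule R L M] {a b : L}
    (hab : (LieModule.toEnd R L M a).range ⊔ (LieModule.toEnd R L M b).range = ⊤)
    (A : Type*) [CommRing A] [Algebra R A] (z : A ⊗[R] M) :
    ∃ u v : A ⊗[R] M, z = ⁅(1 : A) ⊗ₜ[R] a, u⁆ + ⁅(1 : A) ⊗ₜ[R] b, v⁆ := by
  obtain ⟨u, v, hz⟩ := exists_eq_baseChange_add_baseChange hab A z
  rw [← LieModule.toEnd_baseChange, ← LieModule.toEnd_baseChange] at hz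
  exact ⟨u, v, hz⟩

end BaseChange

section RootSpaces

open LieAlgebra LieAlgebra.IsKilling LieModule

variable {K L : Type*} [Field K] [LieRing L] [LieAlgebra K L] [FiniteDimensional K L]
  {H : LieSubalgebra K L} [H.IsCartanSubalgebra]

theorem sum_lie_sub_lie_mem {W : Submodule K L}
    (hW : ∀ χ : H → K, χ ≠ 0 → (rootSpace H χ).toSubmodule ≤ W)
    {e : H.root → L} (he : ∀ β : H.root, e β ∈ rootSpace H (β : Weight K H L))
    {α : H.root} {f : L} (hf : f ∈ rootSpace H (-(α : Weight K H L) : H → K)) :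
    ⁅∑ β, e β, f⁆ - ⁅e α, f⁆ ∈ W := by
  classical
  rw [sum_lie, ← Finset.sum_erase_eq_sub (Finset.mem_univ α)]
  refine W.sum_mem fun β hβ ↦ hW _ ?_ (lie_mem_genWeightSpace_of_mem_genWeightSpace (he β) hf)
  rw [← sub_eq_add_neg, sub_ne_zero]
  exact fun h ↦ Finset.ne_of_mem_erase hβ (Subtype.ext (DFunLike.coe_injective h))

theorem exists_forall_root_apply_ne_zero [CharZero K] :
    ∃ h : H, ∀ α : H.root, (α : Weight K H L) h ≠ 0 := by
  refine Module.Dual.exists_forall_ne_zero_of_forall_exists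
    (fun α : H.root ↦ (α : Weight K H L).toLinear) fun α ↦ ?_
  by_contra! hα
  exact LieSubalgebra.isNonZero_coe_root α (funext hα)

variable [IsTriangularizable K H L]

theorem eq_top_of_cartan_le_of_rootSpace_le {W : Submodule K L} (hH : H.toSubmodule ≤ W)
    (hW : ∀ χ : H → K, χ ≠ 0 → (rootSpace H χ).toSubmodule ≤ W) : W = ⊤ := by
  have hdecomp := cartan_sup_iSup_rootSpace_eq_top (K := K) (L := L) (H := H)
  rw [← LieSubmodule.toSubmodule_inj] at hdecomp
  simp only [LieSubmodule.sup_toSubmodule, LieSubmodule.iSup_toSubmodule,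
    LieSubmodule.top_toSubmodule] at hdecomp
  rw [eq_top_iff, ← hdecomp]
  exact sup_le hH (iSup₂_le fun α hα ↦ hW α hα)

variable [IsKilling K L]

theorem rootSpace_le_range_ad_of_apply_ne_zero [PerfectField K] {χ : H → K} {h : H}
    (hχ : χ h ≠ 0) : (rootSpace H χ).toSubmodule ≤ (ad K L h).range := by
  intro x hx
  have hlie : ⁅(h : L), x⁆ = χ h • x := lie_eq_smul_of_mem_rootSpace hx h
  exact ⟨(χ h)⁻¹ • x, by rw [map_smul, ad_apply, hlie, inv_smul_smul₀ hχ]⟩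

variable [CharZero K]

variable (H) in
theorem exists_forall_rootSpace_le_range_ad :
    ∃ h : H, ∀ χ : H → K, χ ≠ 0 → (rootSpace H χ).toSubmodule ≤ (ad K L h).range := by
  obtain ⟨h, hh⟩ := exists_forall_root_apply_ne_zero (K := K) (L := L) (H := H)
  refine ⟨h, fun χ hχ ↦ ?_⟩
  by_cases hbot : rootSpace H χ = ⊥
  · simp [hbot]
  · let α : Weight K H L := ⟨χ, hbot⟩
    have hα : α.IsNonZero := hχ
    exact rootSpace_le_range_ad_of_apply_ne_zero (hh ⟨α, by simpa using hα⟩)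

theorem exists_lie_eq_coroot {α : Weight K H L} (hα : α.IsNonZero) :
    ∃ e ∈ rootSpace H α, ∃ f ∈ rootSpace H (-α), ⁅e, f⁆ = (coroot α : L) := by
  obtain ⟨h, e, f, hsl2, he, hf⟩ := exists_isSl2Triple_of_weight_isNonZero hα
  exact ⟨e, he, f, hf, by rw [hsl2.lie_e_f, hsl2.h_eq_coroot hα he hf]⟩

theorem cartan_le_of_forall_coroot_mem {W : Submodule K L}
    (hW : ∀ α : H.root, (coroot (α : Weight K H L) : L) ∈ W) : H.toSubmodule ≤ W := by
  have htop : (⊤ : Submodule K H) ≤ W.comap H.toSubmodule.subtype := by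
    rw [← RootPairing.IsRootSystem.span_coroot_eq_top (P := rootSystem H), Submodule.span_le]
    rintro _ ⟨α, rfl⟩
    exact hW α
  exact fun x hx ↦ htop (Submodule.mem_top (x := ⟨x, hx⟩))

theorem exists_range_ad_sup_range_ad_eq_top (H : LieSubalgebra K L) [H.IsCartanSubalgebra]
    [IsTriangularizable K H L] :
    ∃ a b : L, (ad K L a).range ⊔ (ad K L b).range = ⊤ := by
  obtain ⟨h, hh⟩ := exists_forall_rootSpace_le_range_ad H
  choose e he f hf hef using fun α : H.root ↦
    exists_lie_eq_coroot (LieSubalgebra.isNonZero_coe_root α)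
  refine ⟨h, ∑ α, e α, ?_⟩
  set W := (ad K L (h : L)).range ⊔ (ad K L (∑ α, e α)).range
  have hroot (χ : H → K) (hχ : χ ≠ 0) : (rootSpace H χ).toSubmodule ≤ W :=
    (hh χ hχ).trans le_sup_left
  have hcoroot (α : H.root) : (coroot (α : Weight K H L) : L) ∈ W := by
    have hsum : ⁅∑ β, e β, f α⁆ ∈ W := Submodule.mem_sup_right ⟨f α, rfl⟩
    rw [← hef, ← sub_sub_cancel ⁅∑ β, e β, f α⁆ ⁅e α, f α⁆]
    exact W.sub_mem hsum (sum_lie_sub_lie_mem hroot he (hf α))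
  exact eq_top_of_cartan_le_of_rootSpace_le (cartan_le_of_forall_coroot_mem hcoroot) hroot

end RootSpaces

theorem current_algebra_width_le_two_general
    (k : Type*) [Field k] [CharZero k]
    (𝔤 : Type*) [LieRing 𝔤] [LieAlgebra k 𝔤] [FiniteDimensional k 𝔤] [LieAlgebra.IsKilling k 𝔤]
    (H : LieSubalgebra k 𝔤) [H.IsCartanSubalgebra] [LieModule.IsTriangularizable k H 𝔤]
    (A : Type*) [CommRing A] [Algebra k A]
    (z : A ⊗[k] 𝔤) :
    ∃ x₁ y₁ x₂ y₂ : A ⊗[k] 𝔤, z = ⁅x₁, y₁⁆ + ⁅x₂, y₂⁆ := by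
  obtain ⟨a, b, hab⟩ := exists_range_ad_sup_range_ad_eq_top H
  obtain ⟨u, v, hz⟩ := exists_eq_one_tmul_lie_add_one_tmul_lie hab A z
  exact ⟨_, u, _, v, hz⟩

/-- The bracket width of a current Lie algebra `𝔤 ⊗ A` is at most 2: every element is
a sum of two Lie brackets. -/
theorem current_algebra_width_le_two
    (k : Type*) [Field k] [IsAlgClosed k] [CharZero k]
    (𝔤 : Type*) [LieRing 𝔤] [LieAlgebra k 𝔤] [FiniteDimensional k 𝔤]
    [LieAlgebra.IsSimple k 𝔤]
    (A : Type*) [CommRing A] [Algebra k A]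
    (z : A ⊗[k] 𝔤) :
    ∃ x₁ y₁ x₂ y₂ : A ⊗[k] 𝔤, z = ⁅x₁, y₁⁆ + ⁅x₂, y₂⁆ := by
  obtain ⟨x, _⟩ := LieAlgebra.exists_isCartanSubalgebra_engel k 𝔤
  exact current_algebra_width_le_two_general k 𝔤 (LieSubalgebra.engel k x) A z
end

section
/- Let k be an algebraically closed field of characteristic zero, let g be a finite-dimensional simple Lie algebra over k, and let A be a commutative associative unital k-algebra. Then there exist elements w₁, w₂ ∈ g such that every z ∈ g ⊗ A can be written z = [w₁ ⊗ 1, x] + [w₂ ⊗ 1, y] for some x, y ∈ g ⊗ A. -/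
open scoped TensorProduct

/-!
Over a field with at least `dim 𝔤` elements, some `w₁` has a Cartan subalgebra `H` as its Engel
subalgebra, so its centralizer lies in `H`. Since `H` is abelian, `ad H` generates a commutative
Artinian algebra of endomorphisms of `𝔤`; by Nakayama's lemma and the Chinese remainder theorem,
some vector `w₂` has a nil annihilator in this algebra. No nonzero element of `H` is ad-nilpotent,
so the centralizers of `w₁` and `w₂` meet trivially. By invariance of the Killing form the
centralizer of `w` is the orthogonal complement of `⁅w, 𝔤⁆`; hence `⁅w₁, 𝔤⁆ + ⁅w₂, 𝔤⁆ = 𝔤`, and this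
survives extension of scalars.
-/

section AnnihilatorOfAnElement

variable {R M : Type*} [CommRing R] [AddCommGroup M] [Module R M]

theorem nontrivial_quotient_tensorProduct_of_annihilator_le [Module.Finite R M] {I : Ideal R}
    (hI : I ≠ ⊤) (hann : Module.annihilator R M ≤ I) : Nontrivial ((R ⧸ I) ⊗[R] M) := by
  have hsmul : I • (⊤ : Submodule R M) ≠ ⊤ := by
    intro htop
    obtain ⟨r, hr, hrM⟩ := Submodule.exists_sub_one_mem_and_smul_eq_zero_of_fg_of_le_smul
      I (⊤ : Submodule R M) Module.Finite.fg_top htop.ge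
    have hrI : r ∈ I := hann (Module.mem_annihilator.mpr fun m ↦ hrM m trivial)
    exact hI ((Ideal.eq_top_iff_one I).mpr (by simpa using sub_mem hrI hr))
  have : Nontrivial (M ⧸ I • (⊤ : Submodule R M)) := Submodule.Quotient.nontrivial_iff.mpr hsmul
  exact (TensorProduct.quotTensorEquivQuotSMul M I).toEquiv.nontrivial

variable (R M) in
theorem exists_torsionOf_le_jacobson_annihilator [Finite (MaximalSpectrum R)] [Module.Finite R M] :
    ∃ m : M, Ideal.torsionOf R M m ≤ (Module.annihilator R M).jacobson := by
  let ι := {P : MaximalSpectrum R // Module.annihilator R M ≤ P.asIdeal}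
  have hcoprime : Pairwise (Function.onFun IsCoprime fun P : ι ↦ P.1.asIdeal) := fun P Q hPQ ↦
    P.1.isCoprime_of_ne (Subtype.coe_injective.ne hPQ)
  have hnontrivial (P : ι) : ∃ t : (R ⧸ P.1.asIdeal) ⊗[R] M, t ≠ 0 :=
    have := nontrivial_quotient_tensorProduct_of_annihilator_le P.1.isMaximal.ne_top P.2
    exists_ne 0
  choose t ht using hnontrivial
  obtain ⟨m, hm⟩ := Ideal.pi_tensorProductMk_quotient_surjective M _ hcoprime t
  refine ⟨m, le_sInf fun P ⟨hann, hP⟩ r hr ↦ ?_⟩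
  let := Ideal.Quotient.field P
  have htm : (1 : R ⧸ P) ⊗ₜ[R] m ≠ 0 :=
    (congrFun hm ⟨⟨P, hP⟩, hann⟩).trans_ne (ht ⟨⟨P, hP⟩, hann⟩)
  have hrm : Ideal.Quotient.mk P r • ((1 : R ⧸ P) ⊗ₜ[R] m) = 0 := by
    rw [← Ideal.Quotient.algebraMap_eq, algebraMap_smul, ← TensorProduct.tmul_smul,
      (Ideal.mem_torsionOf_iff m r).mp hr, TensorProduct.tmul_zero]
  exact Ideal.Quotient.eq_zero_iff_mem.mp ((smul_eq_zero.mp hrm).resolve_right htm)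

theorem exists_forall_smul_eq_zero_imp_isNilpotent (R M : Type*) [CommRing R] [IsArtinianRing R]
    [AddCommGroup M] [Module R M] [FaithfulSMul R M] [Module.Finite R M] :
    ∃ m : M, ∀ r : R, r • m = 0 → IsNilpotent r := by
  obtain ⟨m, hm⟩ := exists_torsionOf_le_jacobson_annihilator R M
  rw [Module.annihilator_eq_bot.mpr ‹_›, Ideal.jacobson_bot,
    Ring.jacobson_eq_nilradical_of_krullDimLE_zero] at hm
  exact ⟨m, fun r hr ↦ mem_nilradical.mp (hm hr)⟩

end AnnihilatorOfAnElement

theorem exists_forall_apply_eq_zero_imp_isNilpotent {K V : Type*} [Field K] [AddCommGroup V]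
    [Module K V] [FiniteDimensional K V] {s : Set (Module.End K V)}
    (hs : ∀ f ∈ s, ∀ g ∈ s, Commute f g) :
    ∃ v : V, ∀ f ∈ s, f v = 0 → IsNilpotent f := by
  have := Algebra.isMulCommutative_adjoin K hs
  let S := Algebra.adjoin K s
  open scoped IsMulCommutative in
  have : IsArtinianRing S := .of_finite K S
  have : Module.Finite S V := .of_restrictScalars_finite K S V
  obtain ⟨v, hv⟩ := exists_forall_smul_eq_zero_imp_isNilpotent S V
  exact ⟨v, fun f hf hfv ↦ (hv ⟨f, Algebra.subset_adjoin hf⟩ hfv).map S.val⟩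

section InvariantForm

open LieModule

theorem orthogonal_range_toEnd_eq_ker {R L M : Type*} [CommRing R] [LieRing L] [LieAlgebra R L]
    [AddCommGroup M] [Module R M] [LieRingModule L M] [LieModule R L M]
    {Φ : LinearMap.BilinForm R M} (hΦ : Φ.lieInvariant L) (hsep : Φ.SeparatingRight) (x : L) :
    Φ.orthogonal (toEnd R L M x).range = (toEnd R L M x).ker := by
  ext m
  have hinv (n : M) : Φ ⁅x, n⁆ m = 0 ↔ Φ n ⁅x, m⁆ = 0 := by rw [hΦ, neg_eq_zero]
  simp only [LinearMap.BilinForm.mem_orthogonal_iff, LinearMap.mem_range, forall_exists_index,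
    forall_apply_eq_imp_iff, toEnd_apply_apply, LinearMap.mem_ker, hinv]
  exact ⟨hsep _, fun h n ↦ by rw [h, map_zero]⟩

variable {K L M : Type*} [Field K]

theorem eq_top_of_orthogonal_eq_bot [AddCommGroup M] [Module K M] [FiniteDimensional K M]
    {Φ : LinearMap.BilinForm K M} (hΦ : Φ.Nondegenerate) {W : Submodule K M}
    (hW : Φ.orthogonal W = ⊥) : W = ⊤ := by
  have hfinrank := LinearMap.BilinForm.finrank_orthogonal hΦ W
  rw [hW, finrank_bot] at hfinrank
  exact Submodule.eq_top_of_finrank_eq <|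
    W.finrank_le.antisymm (Nat.sub_eq_zero_iff_le.mp hfinrank.symm)

theorem codisjoint_range_toEnd_of_disjoint_ker [LieRing L] [LieAlgebra K L]
    [AddCommGroup M] [Module K M] [LieRingModule L M] [LieModule K L M] [FiniteDimensional K M]
    {Φ : LinearMap.BilinForm K M} (hinv : Φ.lieInvariant L) (hΦ : Φ.Nondegenerate) {x y : L}
    (hxy : Disjoint (toEnd K L M x).ker (toEnd K L M y).ker) :
    Codisjoint (toEnd K L M x).range (toEnd K L M y).range := by
  rw [← orthogonal_range_toEnd_eq_ker hinv hΦ.2, ← orthogonal_range_toEnd_eq_ker hinv hΦ.2] at hxy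
  exact codisjoint_iff.mpr <| eq_top_of_orthogonal_eq_bot hΦ <| le_bot_iff.mp <|
    hxy (Φ.orthogonal_le le_sup_left) (Φ.orthogonal_le le_sup_right)

end InvariantForm

section Killing

open LieAlgebra

variable {K L : Type*} [Field K] [LieRing L] [LieAlgebra K L] [FiniteDimensional K L]
  [IsKilling K L]

theorem exists_disjoint_ker_ad_of_isCartanSubalgebra_engel (x : L)
    [(LieSubalgebra.engel K x).IsCartanSubalgebra] :
    ∃ y : L, Disjoint (ad K L x).ker (ad K L y).ker := by
  let H := LieSubalgebra.engel K x
  have hcomm : ∀ f ∈ ad K L '' H, ∀ g ∈ ad K L '' H, Commute f g := by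
    rintro _ ⟨a, ha, rfl⟩ _ ⟨b, hb, rfl⟩
    have hab : ⁅a, b⁆ = 0 := congrArg Subtype.val (trivial_lie_zero H H ⟨a, ha⟩ ⟨b, hb⟩)
    ext c
    simp only [Module.End.mul_apply, ad_apply]
    rw [leibniz_lie, hab, zero_lie, zero_add]
  obtain ⟨y, hy⟩ := exists_forall_apply_eq_zero_imp_isNilpotent hcomm
  refine ⟨y, Submodule.disjoint_def.mpr fun v (hxv : ⁅x, v⁆ = 0) (hyv : ⁅y, v⁆ = 0) ↦ ?_⟩
  have hvH : v ∈ H := (LieSubalgebra.mem_engel_iff K x v).mpr ⟨1, by simpa using hxv⟩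
  have hvy : ad K L v y = 0 := by rw [ad_apply, ← lie_skew, hyv, neg_zero]
  exact IsKilling.eq_zero_of_isNilpotent_ad_of_mem_isCartanSubalgebra K L H hvH
    (hy _ (Set.mem_image_of_mem _ hvH) hvy)

variable (K L) in
theorem exists_codisjoint_range_ad (hK : Module.finrank K L ≤ Cardinal.mk K) :
    ∃ x y : L, Codisjoint (ad K L x).range (ad K L y).range := by
  obtain ⟨x, _⟩ := exists_isCartanSubalgebra_engel_of_finrank_le_card K L hK
  obtain ⟨y, hxy⟩ := exists_disjoint_ker_ad_of_isCartanSubalgebra_engel (K := K) x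
  exact ⟨x, y, codisjoint_range_toEnd_of_disjoint_ker (LieModule.traceForm_lieInvariant K L L)
    (IsKilling.killingForm_nondegenerate K L) hxy⟩

end Killing

theorem codisjoint_range_baseChange {R M N P : Type*} (A : Type*) [CommSemiring R] [Semiring A]
    [Algebra R A] [AddCommMonoid M] [AddCommMonoid N] [AddCommMonoid P] [Module R M] [Module R N]
    [Module R P] {f : M →ₗ[R] P} {g : N →ₗ[R] P} (hfg : Codisjoint f.range g.range) :
    Codisjoint (f.baseChange A).range (g.baseChange A).range := by
  rw [codisjoint_iff_le_sup, ← Submodule.baseChange_top, Submodule.baseChange_eq_span,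
    Submodule.span_le, ← hfg.eq_top]
  rintro _ ⟨p, hp, rfl⟩
  obtain ⟨_, ⟨m, rfl⟩, _, ⟨n, rfl⟩, rfl⟩ := Submodule.mem_sup.mp hp
  rw [map_add]
  exact Submodule.add_mem_sup ⟨1 ⊗ₜ m, rfl⟩ ⟨1 ⊗ₜ n, rfl⟩

theorem current_algebra_two_generators_general
    (k : Type*) [Field k]
    (𝔤 : Type*) [LieRing 𝔤] [LieAlgebra k 𝔤] [FiniteDimensional k 𝔤]
    [LieAlgebra.IsKilling k 𝔤] (hk : Module.finrank k 𝔤 ≤ Cardinal.mk k)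
    (A : Type*) [CommRing A] [Algebra k A] :
    ∃ w₁ w₂ : 𝔤, ∀ z : A ⊗[k] 𝔤, ∃ x y : A ⊗[k] 𝔤,
      z = ⁅(1 : A) ⊗ₜ[k] w₁, x⁆ + ⁅(1 : A) ⊗ₜ[k] w₂, y⁆ := by
  obtain ⟨w₁, w₂, hw⟩ := exists_codisjoint_range_ad k 𝔤 hk
  refine ⟨w₁, w₂, fun z ↦ ?_⟩
  have hA := codisjoint_range_baseChange A hw
  rw [LieAlgebra.ad, ← LieModule.toEnd_baseChange, ← LieModule.toEnd_baseChange] at hA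
  obtain ⟨_, ⟨x, rfl⟩, _, ⟨y, rfl⟩, hxy⟩ :=
    Submodule.mem_sup.mp (hA.eq_top.ge (Submodule.mem_top (x := z)))
  exact ⟨x, y, hxy.symm⟩

/-- There exist `w₁ w₂ ∈ 𝔤` such that every element of the current Lie algebra `𝔤 ⊗ A`
is of the form `⁅w₁ ⊗ 1, x⁆ + ⁅w₂ ⊗ 1, y⁆`. -/
theorem current_algebra_two_generators
    (k : Type*) [Field k] [IsAlgClosed k] [CharZero k]
    (𝔤 : Type*) [LieRing 𝔤] [LieAlgebra k 𝔤] [FiniteDimensional k 𝔤]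
    [LieAlgebra.IsSimple k 𝔤]
    (A : Type*) [CommRing A] [Algebra k A] :
    ∃ w₁ w₂ : 𝔤, ∀ z : A ⊗[k] 𝔤, ∃ x y : A ⊗[k] 𝔤,
      z = ⁅(1 : A) ⊗ₜ[k] w₁, x⁆ + ⁅(1 : A) ⊗ₜ[k] w₂, y⁆ :=
  current_algebra_two_generators_general k 𝔤
    (Cardinal.natCast_le_aleph0.trans (Cardinal.infinite_iff.mp inferInstance)) A
end

section
/- Let k be an algebraically closed field of characteristic zero and g a finite-dimensional simple Lie algebra over k. Every element of the current Lie algebra g ⊗ k[[t]] (with k[[t]] the ring of formal power series) is a single Lie bracket if and only if g satisfies condition (*): every nonzero c ∈ g can be written c = [a, b] for some a, b ∈ g with C_g(a) ∩ C_g(b) = 0. -/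
open scoped TensorProduct

/-!
Both sides of the equivalence hold, and the bracket width follows from condition (*).

If `a` and `b` have trivial common centralizer, then by duality for the Killing form the
differential `(p, q) ↦ ⁅a, q⁆ + ⁅p, b⁆` of the bracket at `(a, b)` is onto. So, after division by
a power of `X`, a power series whose constant term is `⁅a, b⁆` is a bracket, whose factors are
found coefficient by coefficient.

For condition (*), let `H` be a splitting Cartan subalgebra. Being a bracket as in (*) is invariant
under exponentials `exp (ad e)` of root vectors `e`, and these are used to move `c ≠ 0` into good
position. First `c` is made orthogonal to `H`, by killing the `H`-component of `c` one root at a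
time; there is always a root to continue with, because the root form is anisotropic over `ℚ`. Next
the weights in the support of `c` are made to span the dual of `H`: a root vector `e` with
`⁅e, c⁆ ≠ 0` whose root lies outside their span enlarges it, and if there is no such `e`, the span
is invariant under the Weyl group, hence everything because the root system is irreducible.
Now let `a ∈ H` be regular. As `c` is orthogonal to `H = ker (ad a)`, it is of the form `⁅a, b⁆`.
An element commuting with `a` and `b` lies in `H` and commutes with `c`, so it is annihilated by all
weights in the support of `c`, and is therefore zero.
-/

namespace BracketWidth

open Finset.HasAntidiagonal (antidiagonal)

section Coefficients

variable {k : Type*} [CommSemiring k] {M : Type*} [AddCommMonoid M] [Module k M]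

/-- The `n`-th coefficient of an element of `k⟦X⟧ ⊗ M`, seen as a power series with coefficients
in `M`. -/
noncomputable def coeff (n : ℕ) : PowerSeries k ⊗[k] M →ₗ[k] M :=
  TensorProduct.lid k M ∘ₗ (PowerSeries.coeff n).rTensor M

@[simp]
lemma coeff_tmul (n : ℕ) (p : PowerSeries k) (x : M) :
    coeff n (p ⊗ₜ[k] x) = PowerSeries.coeff n p • x := by
  simp [coeff]

lemma coeff_X_pow_smul (m n : ℕ) (z : PowerSeries k ⊗[k] M) :
    coeff n ((PowerSeries.X ^ m : PowerSeries k) • z) = if m ≤ n then coeff (n - m) z else 0 := by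
  induction z using TensorProduct.induction_on with
  | zero => simp
  | add z₁ z₂ h₁ h₂ => simp only [smul_add, map_add, h₁, h₂]; split_ifs <;> simp
  | tmul p x =>
    rw [TensorProduct.smul_tmul', coeff_tmul, coeff_tmul, smul_eq_mul,
      PowerSeries.coeff_X_pow_mul', ite_smul, zero_smul]

lemma coeff_ext [Module.Free k M] {z w : PowerSeries k ⊗[k] M}
    (h : ∀ n, coeff n z = coeff n w) : z = w := by
  let b := Module.Free.chooseBasis k M
  have coeff_coordinate (v : PowerSeries k ⊗[k] M) (i n) :
      PowerSeries.coeff n (TensorProduct.equivFinsuppOfBasisRight b v i) =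
        b.repr (coeff n v) i := by
    induction v using TensorProduct.induction_on with
    | zero => simp
    | add v₁ v₂ h₁ h₂ => simp [h₁, h₂]
    | tmul p x => simp [mul_comm]
  apply (TensorProduct.equivFinsuppOfBasisRight b).injective
  ext i n
  rw [coeff_coordinate, coeff_coordinate, h]

lemma exists_coeff_eq [Module.Finite k M] (s : ℕ → M) :
    ∃ z : PowerSeries k ⊗[k] M, ∀ n, coeff n z = s n := by
  obtain ⟨r, π, hπ⟩ := Module.Finite.exists_fin' k M
  choose v hv using fun n ↦ hπ (s n)
  refine ⟨∑ i, (PowerSeries.mk fun n ↦ v n i) ⊗ₜ[k] π fun j ↦ if i = j then 1 else 0,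
    fun n ↦ ?_⟩
  simp only [map_sum, coeff_tmul, PowerSeries.coeff_mk, ← hv]
  exact (π.pi_apply_eq_sum_univ (v n)).symm

lemma exists_X_pow_smul_eq [Module.Free k M] [Module.Finite k M] {z : PowerSeries k ⊗[k] M}
    (hz : z ≠ 0) :
    ∃ (m : ℕ) (w : PowerSeries k ⊗[k] M),
      coeff 0 w ≠ 0 ∧ (PowerSeries.X ^ m : PowerSeries k) • w = z := by
  classical
  have exists_coeff_ne : ∃ n, coeff n z ≠ 0 := by
    by_contra! h
    exact hz (coeff_ext fun n ↦ by rw [h, map_zero])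
  obtain ⟨w, hw⟩ := exists_coeff_eq (k := k) fun n ↦ coeff (n + Nat.find exists_coeff_ne) z
  refine ⟨Nat.find exists_coeff_ne, w, ?_, coeff_ext fun n ↦ ?_⟩
  · rw [hw, zero_add]
    exact Nat.find_spec exists_coeff_ne
  · rw [coeff_X_pow_smul]
    split_ifs with hn
    · rw [hw, Nat.sub_add_cancel hn]
    · exact (not_not.1 (Nat.find_min exists_coeff_ne (not_le.1 hn))).symm

end Coefficients

section PowerSeriesBracket

variable {L : Type*} [LieRing L]

/-- The coefficients of power series `x` and `y` with `⁅x, y⁆ = z`, starting from `(a, b)`; here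
`solve w` is meant to be a pair `(p, q)` with `⁅a, q⁆ + ⁅p, b⁆ = w`. -/
def bracketSolution (a b : L) (solve : L → L × L) (z : ℕ → L) : ℕ → L × L
  | 0 => (a, b)
  | n + 1 => solve (z (n + 1) - ∑ i : Fin n,
      ⁅(bracketSolution a b solve z (i + 1)).1, (bracketSolution a b solve z (n - i)).2⁆)

lemma sum_antidiagonal_lie_bracketSolution {a b : L} {solve : L → L × L}
    (hsolve : ∀ w, ⁅a, (solve w).2⁆ + ⁅(solve w).1, b⁆ = w) {z : ℕ → L} (hz : z 0 = ⁅a, b⁆)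
    (n : ℕ) :
    ∑ p ∈ antidiagonal n,
      ⁅(bracketSolution a b solve z p.1).1, (bracketSolution a b solve z p.2).2⁆ = z n := by
  set s := bracketSolution a b solve z with hs
  have s_zero : s 0 = (a, b) := by rw [hs, bracketSolution]
  rcases n with _ | n
  · simp [s_zero, hz]
  · have s_succ : s (n + 1) =
        solve (z (n + 1) - ∑ i : Fin n, ⁅(s (i + 1)).1, (s (n - i)).2⁆) := by
      rw [hs, bracketSolution]
    calc ∑ p ∈ antidiagonal (n + 1), ⁅(s p.1).1, (s p.2).2⁆
      _ = ∑ i : Fin n, ⁅(s (i + 1)).1, (s (n - i)).2⁆ +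
            (⁅a, (s (n + 1)).2⁆ + ⁅(s (n + 1)).1, b⁆) := by
        rw [Finset.Nat.sum_antidiagonal_eq_sum_range_succ (fun i j ↦ ⁅(s i).1, (s j).2⁆),
          Finset.sum_range_succ, Finset.sum_range_succ', Finset.sum_range]
        simp [s_zero, add_assoc]
      _ = z (n + 1) := by rw [s_succ, hsolve, add_sub_cancel]

end PowerSeriesBracket

section CurrentAlgebra

variable {k : Type*} [CommRing k] {L : Type*} [LieRing L] [LieAlgebra k L]

lemma coeff_lie (n : ℕ) (x y : PowerSeries k ⊗[k] L) :
    coeff n ⁅x, y⁆ = ∑ p ∈ antidiagonal n, ⁅coeff p.1 x, coeff p.2 y⁆ := by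
  induction x using TensorProduct.induction_on with
  | zero => simp [zero_lie (L := PowerSeries k ⊗[k] L) y]
  | add x₁ x₂ h₁ h₂ =>
    simp [add_lie (L := PowerSeries k ⊗[k] L) x₁ x₂ y, h₁, h₂, Finset.sum_add_distrib]
  | tmul p u =>
    induction y using TensorProduct.induction_on with
    | zero => simp [lie_zero (L := PowerSeries k ⊗[k] L)]
    | add y₁ y₂ h₁ h₂ =>
      simp [lie_add (L := PowerSeries k ⊗[k] L), h₁, h₂, Finset.sum_add_distrib]
    | tmul q v =>
      simp only [LieAlgebra.ExtendScalars.bracket_tmul, coeff_tmul, PowerSeries.coeff_mul,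
        Finset.sum_smul, smul_lie, lie_smul, smul_smul, mul_comm]

lemma exists_eq_lie_of_coeff_zero_eq_lie [Module.Free k L] [Module.Finite k L] {a b : L}
    (h : ∀ w : L, ∃ p q : L, ⁅a, q⁆ + ⁅p, b⁆ = w) {z : PowerSeries k ⊗[k] L}
    (hz : coeff 0 z = ⁅a, b⁆) : ∃ x y : PowerSeries k ⊗[k] L, z = ⁅x, y⁆ := by
  choose p q hpq using h
  let s := bracketSolution a b (fun w ↦ (p w, q w)) (coeff · z)
  obtain ⟨x, hx⟩ := exists_coeff_eq (k := k) fun n ↦ (s n).1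
  obtain ⟨y, hy⟩ := exists_coeff_eq (k := k) fun n ↦ (s n).2
  refine ⟨x, y, coeff_ext fun n ↦ ?_⟩
  simp only [coeff_lie, hx, hy, s]
  exact (sum_antidiagonal_lie_bracketSolution (z := (coeff · z)) hpq hz n).symm

end CurrentAlgebra

/-- `c` is the bracket of two elements with trivial common centralizer, as condition (*) asks of
every nonzero `c`. When the Killing form is nondegenerate, the condition on `a` and `b` says that
the bracket map is submersive at `(a, b)`. -/
def IsSubmersiveBracket {L : Type*} [LieRing L] (c : L) : Prop :=
  ∃ a b : L, c = ⁅a, b⁆ ∧ ∀ x : L, ⁅a, x⁆ = 0 → ⁅b, x⁆ = 0 → x = 0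

lemma IsSubmersiveBracket.map {k L L' : Type*} [CommRing k] [LieRing L] [LieAlgebra k L]
    [LieRing L'] [LieAlgebra k L'] {c : L} (hc : IsSubmersiveBracket c) (φ : L ≃ₗ⁅k⁆ L') :
    IsSubmersiveBracket (φ c) := by
  obtain ⟨a, b, rfl, hab⟩ := hc
  have lie_symm_eq_zero {u : L} {x : L'} (h : ⁅φ u, x⁆ = 0) : ⁅u, φ.symm x⁆ = 0 := by
    rw [← φ.symm_apply_apply u, ← φ.symm.map_lie, h, map_zero]
  exact ⟨φ a, φ b, φ.map_lie a b, fun x ha hb ↦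
    (map_eq_zero_iff φ.symm φ.symm.injective).1
      (hab _ (lie_symm_eq_zero ha) (lie_symm_eq_zero hb))⟩

lemma exists_lie_add_lie_eq {k L : Type*} [CommRing k] [LieRing L] [LieAlgebra k L] {a b : L}
    (h : LinearMap.range (LieAlgebra.ad k L a) ⊔ LinearMap.range (LieAlgebra.ad k L b) = ⊤)
    (w : L) : ∃ p q : L, ⁅a, q⁆ + ⁅p, b⁆ = w := by
  obtain ⟨_, ⟨q, rfl⟩, _, ⟨p, rfl⟩, rfl⟩ := Submodule.mem_sup.1 (h ▸ Submodule.mem_top : w ∈ _)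
  exact ⟨-p, q, by simp⟩

section Exponential

open LieAlgebra

variable {k : Type*} [CommRing k] [Algebra ℚ k] {L : Type*} [LieRing L] [LieAlgebra k L]

lemma exists_killingForm_apply_eq_add {e : L} (he : IsNilpotent (ad k L e)) :
    ∃ φ : L ≃ₗ⁅k⁆ L, ∀ c y, (∀ n ≥ 2, killingForm k L c ((ad k L e ^ n) y) = 0) →
      killingForm k L (φ c) y = killingForm k L c y + killingForm k L c ⁅e, y⁆ := by
  let : Module ℚ L := Module.compHom L (algebraMap ℚ k)
  have rat_smul (q : ℚ) (x : L) : q • x = algebraMap ℚ k q • x := rfl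
  let : LieAlgebra ℚ L := { lie_smul := fun q x y ↦ by rw [rat_smul, rat_smul, lie_smul] }
  have hD : (LieDerivation.ad k L e).toLinearMap = ad k L e := by ext; simp
  obtain ⟨N, hN⟩ := he
  have hN' : (ad k L e) ^ (N + 2) = 0 := by rw [pow_add, hN, zero_mul]
  have hDnil : IsNilpotent (LieDerivation.ad k L e).toLinearMap := ⟨N + 2, by rw [hD, hN']⟩
  let ψ := (LieDerivation.ad k L e).exp hDnil
  have ψ_apply (y : L) : ψ y = ∑ n ∈ Finset.range (N + 2),
      algebraMap ℚ k (n.factorial : ℚ)⁻¹ • (ad k L e ^ n) y := by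
    refine (LieDerivation.exp_map_apply _ hDnil y).trans ?_
    rw [hD, IsNilpotent.exp_eq_sum hN', LinearMap.sum_apply]
    simp only [LinearMap.smul_apply, rat_smul]
  -- `ψ.symm` is `exp (-ad e)`, the adjoint of `ψ` for the Killing form.
  refine ⟨ψ.symm, fun c y h ↦ ?_⟩
  rw [← killingForm_of_equiv_apply ψ (ψ.symm c) y, ψ.apply_symm_apply, ψ_apply,
    Finset.sum_range_succ', Finset.sum_range_succ']
  simp only [map_add, map_sum, map_smul]
  rw [Finset.sum_eq_zero fun n _ ↦ by rw [h _ (by omega), smul_zero]]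
  simp [add_comm]

end Exponential

section KillingForm

open LieAlgebra

variable {k : Type*} [Field k] {L : Type*} [LieRing L] [LieAlgebra k L] [IsKilling k L]

lemma orthogonal_range_ad (a : L) :
    (killingForm k L).orthogonal (LinearMap.range (ad k L a)) = LinearMap.ker (ad k L a) := by
  ext x
  simp only [LinearMap.BilinForm.mem_orthogonal_iff, LinearMap.mem_range, forall_exists_index,
    forall_apply_eq_imp_iff, LinearMap.mem_ker, ad_apply]
  constructor
  · refine fun h ↦ (IsKilling.killingForm_nondegenerate k L).1 _ fun y ↦ ?_
    rw [LieModule.traceForm_apply_lie_apply', LieModule.traceForm_comm]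
    exact neg_eq_zero.2 (h y)
  · intro h y
    simp [LieModule.traceForm_apply_lie_apply', h]

variable [FiniteDimensional k L]

lemma orthogonal_ker_ad (a : L) :
    (killingForm k L).orthogonal (LinearMap.ker (ad k L a)) = LinearMap.range (ad k L a) := by
  rw [← orthogonal_range_ad, LinearMap.BilinForm.orthogonal_orthogonal
    (IsKilling.killingForm_nondegenerate k L) (LieModule.traceForm_isSymm k L L).isRefl]

lemma range_ad_sup_range_ad_eq_top {a b : L} (hab : ∀ x : L, ⁅a, x⁆ = 0 → ⁅b, x⁆ = 0 → x = 0) :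
    LinearMap.range (ad k L a) ⊔ LinearMap.range (ad k L b) = ⊤ := by
  set W := LinearMap.range (ad k L a) ⊔ LinearMap.range (ad k L b)
  have hW : (killingForm k L).orthogonal W = ⊥ := by
    refine (Submodule.eq_bot_iff _).2 fun x hx ↦ hab x ?_ ?_
    · exact (orthogonal_range_ad a).le (LinearMap.BilinForm.orthogonal_le le_sup_left hx)
    · exact (orthogonal_range_ad b).le (LinearMap.BilinForm.orthogonal_le le_sup_right hx)
  rw [← LinearMap.BilinForm.orthogonal_orthogonal (IsKilling.killingForm_nondegenerate k L)
    (LieModule.traceForm_isSymm k L L).isRefl W, hW, LinearMap.BilinForm.orthogonal_bot]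

theorem exists_eq_lie_of_forall_isSubmersiveBracket
    (h : ∀ c : L, c ≠ 0 → IsSubmersiveBracket c) (z : PowerSeries k ⊗[k] L) :
    ∃ x y : PowerSeries k ⊗[k] L, z = ⁅x, y⁆ := by
  rcases eq_or_ne z 0 with rfl | hz
  · exact ⟨0, 0, (lie_self (L := PowerSeries k ⊗[k] L) 0).symm⟩
  obtain ⟨m, w, hw, rfl⟩ := exists_X_pow_smul_eq hz
  obtain ⟨a, b, hwab, hab⟩ := h _ hw
  obtain ⟨x, y, rfl⟩ := exists_eq_lie_of_coeff_zero_eq_lie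
    (exists_lie_add_lie_eq (range_ad_sup_range_ad_eq_top (k := k) hab)) hwab
  exact ⟨(PowerSeries.X ^ m : PowerSeries k) • x, y,
    (smul_lie (L := PowerSeries k ⊗[k] L) _ x y).symm⟩

end KillingForm

lemma nsmul_add_notMem {k M : Type*} [Field k] [CharZero k] [AddCommGroup M] [Module k M]
    {V : Submodule k M} {x y : M} (hx : x ∉ V) (hy : y ∈ V) {n : ℕ} (hn : n ≠ 0) :
    n • x + y ∉ V := by
  rwa [Submodule.add_mem_iff_left _ hy, ← Nat.cast_smul_eq_nsmul k,
    Submodule.smul_mem_iff _ (Nat.cast_ne_zero.2 hn)]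

section RootPairing

variable {ι k M N : Type*} [Field k] [CharZero k] [AddCommGroup M] [Module k M]
  [AddCommGroup N] [Module k N] (P : RootPairing ι k M N) {T : Set ι} {x : M}

lemma rootForm_self_eq_zero_of_mem_span_image [Fintype ι]
    (hx : x ∈ Submodule.span k (P.root '' T))
    (h : ∀ i ∈ T, P.coroot' i x = 0) : P.RootForm x x = 0 := by
  have rootForm_root_eq_zero (i) (hi : i ∈ T) : P.RootForm x (P.root i) = 0 := by
    have key := P.rootForm_reflection_reflection_apply i x (P.root i)
    rw [P.reflection_apply, h i hi, zero_smul, sub_zero, P.reflection_apply_self, map_neg] at key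
    exact self_eq_neg.1 key.symm
  suffices Submodule.span k (P.root '' T) ≤ LinearMap.ker (P.RootForm x) from this hx
  rw [Submodule.span_le]
  rintro _ ⟨i, hi, rfl⟩
  exact rootForm_root_eq_zero i hi

variable [Finite ι] [P.IsCrystallographic]

-- The root form is a sum of squares, hence anisotropic over `ℚ`; a `ℚ`-linear functional on `k`
-- carries `x` to a vector with rational values on the coroots, where this can be used.
lemma coroot'_eq_zero_of_mem_span_image (hx : x ∈ Submodule.span k (P.root '' T))
    (h : ∀ i ∈ T, P.coroot' i x = 0) (j : ι) : P.coroot' j x = 0 := by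
  have := Fintype.ofFinite ι
  have := Fintype.ofFinite T
  obtain ⟨a, rfl⟩ := (Fintype.mem_span_image_iff_exists_fun k).1 hx
  rw [← Module.forall_dual_apply_eq_zero_iff ℚ]
  intro f
  let v : M := ∑ i, (f (a i) : k) • P.root i
  have coroot'_v (j : ι) : P.coroot' j v = (f (P.coroot' j (∑ i, a i • P.root i)) : k) := by
    simp only [v, map_sum, map_smul, P.root_coroot'_eq_pairing, ← P.algebraMap_pairingIn ℤ,
      algebraMap_int_eq, eq_intCast, smul_eq_mul, Rat.cast_sum, mul_comm (a _), ← zsmul_eq_mul,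
      map_zsmul]
    simp [mul_comm]
  have rootForm_v : P.RootForm v v = 0 := by
    refine rootForm_self_eq_zero_of_mem_span_image P (T := T) (Submodule.sum_mem _ fun i _ ↦
      Submodule.smul_mem _ _ (Submodule.subset_span ⟨i, i.2, rfl⟩)) fun i hi ↦ ?_
    rw [coroot'_v, h i hi, map_zero, Rat.cast_zero]
  simp only [P.rootForm_apply_apply, coroot'_v] at rootForm_v
  norm_cast at rootForm_v
  rw [Finset.sum_eq_zero_iff_of_nonneg fun i _ ↦ mul_self_nonneg _] at rootForm_v
  exact mul_self_eq_zero.1 (rootForm_v j (Finset.mem_univ j))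

lemma exists_coroot'_ne_zero_of_mem_span_image (hx : x ∈ Submodule.span k (P.root '' T))
    (hx₀ : x ≠ 0) : ∃ i ∈ T, P.coroot' i x ≠ 0 := by
  have := Fintype.ofFinite ι
  by_contra! h
  have hx_ker : x ∈ LinearMap.ker P.RootForm := by
    ext y
    simp [P.rootForm_apply_apply, coroot'_eq_zero_of_mem_span_image P hx h]
  have hx_span : x ∈ P.rootSpan k := Submodule.span_mono (Set.image_subset_range _ _) hx
  exact hx₀ (Submodule.disjoint_def.1 P.disjoint_rootSpan_ker_rootForm x hx_span hx_ker)

end RootPairing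

section SplitKilling

open LieAlgebra LieAlgebra.IsKilling LieModule Module

variable {k : Type*} [Field k] {L : Type*} [LieRing L] [LieAlgebra k L]

/-- The restriction to `H` of the functional on `L` represented by `c` through the Killing form:
the component of `c` along `H`, seen in the dual of `H`. -/
noncomputable def cartanPart (H : LieSubalgebra k L) (c : L) : Dual k H :=
  killingForm k L c ∘ₗ H.toSubmodule.subtype

@[simp]
lemma cartanPart_apply (H : LieSubalgebra k L) (c : L) (u : H) :
    cartanPart H c u = killingForm k L c u := rfl

/-- The span of those `χ` for which `c` pairs nontrivially with the root space of `χ`, i.e. of the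
weights in the support of `c`, up to sign. -/
def supportSpan (H : LieSubalgebra k L) [LieRing.IsNilpotent H] (c : L) :
    Submodule k (Dual k H) :=
  Submodule.span k {χ | ∃ y ∈ rootSpace H χ, killingForm k L c y ≠ 0}

section

variable {H : LieSubalgebra k L} [LieRing.IsNilpotent H] {c y : L} {χ : Dual k H}

lemma mem_supportSpan (hy : y ∈ rootSpace H χ) (hcy : killingForm k L c y ≠ 0) :
    χ ∈ supportSpan H c :=
  Submodule.subset_span ⟨y, hy, hcy⟩

lemma killingForm_eq_zero_of_notMem_supportSpan (hχ : χ ∉ supportSpan H c)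
    (hy : y ∈ rootSpace H χ) : killingForm k L c y = 0 :=
  not_not.1 fun hcy ↦ hχ (mem_supportSpan hy hcy)

end

variable [CharZero k] [FiniteDimensional k L] [IsKilling k L]
  {H : LieSubalgebra k L} [H.IsCartanSubalgebra] [IsTriangularizable k H L] {c e : L}

lemma exists_conj_of_mem_rootSpace {β : Dual k H} (hβ : β ≠ 0) (he : e ∈ rootSpace H β) :
    ∃ φ : L ≃ₗ⁅k⁆ L, ∀ c,
      cartanPart H (φ c) = cartanPart H c - killingForm k L c e • β ∧
      ∀ y, (∀ n ≥ 2, killingForm k L c ((ad k L e ^ n) y) = 0) →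
        killingForm k L (φ c) y = killingForm k L c y + killingForm k L c ⁅e, y⁆ := by
  have hβ' : (β : H → k) ≠ 0 := by simpa using hβ
  obtain ⟨φ, hφ⟩ := exists_killingForm_apply_eq_add (isNilpotent_ad_of_mem_rootSpace H hβ' he)
  refine ⟨φ, fun c ↦ ⟨LinearMap.ext fun u ↦ ?_, hφ c⟩⟩
  have lie_e_u : ⁅e, (u : L)⁆ = -(β u • e) := by
    rw [← lie_skew, ← lie_eq_smul_of_mem_rootSpace he u]
    rfl
  rw [cartanPart_apply, hφ, lie_e_u]
  · simp [sub_eq_add_neg, mul_comm]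
  · intro n hn
    obtain ⟨m, rfl⟩ := Nat.exists_eq_add_of_le' hn
    simp [pow_add, pow_two, lie_e_u]

lemma exists_cartanPart_eq_sub_smul_of_mem_rootSpace {β : Dual k H} (hβ : β ≠ 0)
    (he : e ∈ rootSpace H β) (hce : killingForm k L c e ≠ 0) (t : k) :
    ∃ φ : L ≃ₗ⁅k⁆ L, cartanPart H (φ c) = cartanPart H c - t • β := by
  obtain ⟨φ, hφ⟩ := exists_conj_of_mem_rootSpace hβ
    (Submodule.smul_mem _ (t / killingForm k L c e) he)
  exact ⟨φ, by rw [(hφ c).1, map_smul, smul_eq_mul, div_mul_cancel₀ _ hce]⟩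

lemma exists_cartanPart_eq_sub_smul {α : Weight k H L} (hα : α.IsNonZero)
    (hc : cartanPart H c (coroot α) ≠ 0) (t : k) :
    ∃ φ : L ≃ₗ⁅k⁆ L, cartanPart H (φ c) = cartanPart H c - t • α.toLinear := by
  obtain ⟨h, e, f, hef, he, hf⟩ := exists_isSl2Triple_of_weight_isNonZero hα
  have hα₀ : α.toLinear ≠ 0 := by simpa using hα
  by_cases hce : killingForm k L c e = 0
  swap
  · exact exists_cartanPart_eq_sub_smul_of_mem_rootSpace hα₀ he hce t
  obtain ⟨ψ, hψ, hψf⟩ : ∃ ψ : L ≃ₗ⁅k⁆ L,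
      cartanPart H (ψ c) = cartanPart H c ∧ killingForm k L (ψ c) f ≠ 0 := by
    by_cases hcf : killingForm k L c f = 0
    swap
    · exact ⟨LieEquiv.refl, rfl, hcf⟩
    obtain ⟨ψ, hψ⟩ := exists_conj_of_mem_rootSpace hα₀ he
    refine ⟨ψ, by rw [(hψ c).1, hce, zero_smul, sub_zero], ?_⟩
    rw [(hψ c).2, hcf, zero_add, hef.lie_e_f, hef.h_eq_coroot hα he hf]
    · exact hc
    · intro n hn
      obtain ⟨m, rfl⟩ := Nat.exists_eq_add_of_le' hn
      have lie_e_e_f : ⁅e, ⁅e, f⁆⁆ = -(2 • e) := by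
        rw [hef.lie_e_f, ← lie_skew, hef.lie_h_e_nsmul]
      rcases m with _ | m
      · simp [pow_two, lie_e_e_f, hce]
      · simp [pow_succ, lie_e_e_f]
  obtain ⟨φ, hφ⟩ := exists_cartanPart_eq_sub_smul_of_mem_rootSpace (β := -α.toLinear)
    (neg_ne_zero.2 hα₀) hf hψf (-t)
  exact ⟨ψ.trans φ, by simpa [hψ] using hφ⟩

lemma exists_cartanPart_eq_zero_of_mem_span (T : Finset H.root)
    (hc : cartanPart H c ∈ Submodule.span k ((rootSystem H).root '' T)) :
    ∃ φ : L ≃ₗ⁅k⁆ L, cartanPart H (φ c) = 0 := by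
  classical
  induction T using Finset.strongInduction generalizing c with
  | H T ih =>
    by_cases hc₀ : cartanPart H c = 0
    · exact ⟨LieEquiv.refl, hc₀⟩
    obtain ⟨α, hαT, hα⟩ := exists_coroot'_ne_zero_of_mem_span_image _ hc hc₀
    rw [← Finset.insert_erase hαT, Finset.coe_insert, Set.image_insert_eq] at hc
    obtain ⟨t, w, hw, hcw⟩ := Submodule.mem_span_insert.1 hc
    obtain ⟨φ, hφ⟩ := exists_cartanPart_eq_sub_smul (H.isNonZero_coe_root α) hα t
    rw [hcw, add_comm] at hφ
    obtain ⟨ψ, hψ⟩ := ih (T.erase α) (Finset.erase_ssubset hαT)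
      (c := φ c) (by rw [hφ]; simpa using hw)
    exact ⟨φ.trans ψ, hψ⟩

lemma exists_cartanPart_eq_zero (H : LieSubalgebra k L) [H.IsCartanSubalgebra]
    [IsTriangularizable k H L] (c : L) : ∃ φ : L ≃ₗ⁅k⁆ L, cartanPart H (φ c) = 0 := by
  refine exists_cartanPart_eq_zero_of_mem_span Finset.univ ?_
  rw [Finset.coe_univ, Set.image_univ, RootPairing.IsRootSystem.span_root_eq_top]
  exact Submodule.mem_top

lemma eq_zero_of_killingForm_rootSpace_eq_zero (H : LieSubalgebra k L) [H.IsCartanSubalgebra]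
    [IsTriangularizable k H L]
    (h : ∀ χ : Dual k H, ∀ y ∈ rootSpace H χ, killingForm k L c y = 0) : c = 0 := by
  refine (killingForm_nondegenerate k L).1 c fun y ↦ ?_
  have hy : y ∈ ⨆ χ : Weight k H L, genWeightSpace L χ := by
    rw [iSup_genWeightSpace_eq_top' k H L]
    exact LieSubmodule.mem_top y
  induction hy using LieSubmodule.iSup_induction' with
  | mem χ y hy => exact h χ.toLinear y hy
  | zero => exact map_zero _
  | add y z _ _ hy hz => rw [map_add, hy, hz, add_zero]

lemma apply_eq_zero_of_mem_supportSpan {u : H} (hcu : ⁅c, (u : L)⁆ = 0) {χ : Dual k H}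
    (hχ : χ ∈ supportSpan H c) : χ u = 0 := by
  suffices supportSpan H c ≤ LinearMap.ker (Dual.eval k H u) from this hχ
  refine Submodule.span_le.2 ?_
  rintro χ ⟨y, hy, hcy⟩
  have key : χ u * killingForm k L c y = 0 := by
    rw [← smul_eq_mul, ← map_smul, ← lie_eq_smul_of_mem_rootSpace hy u]
    change killingForm k L c ⁅(u : L), y⁆ = 0
    rw [← traceForm_apply_lie_apply, hcu, map_zero, LinearMap.zero_apply]
  exact (mul_eq_zero.1 key).resolve_right hcy

lemma supportSpan_ne_bot (hc : c ≠ 0) (hcH : cartanPart H c = 0) : supportSpan H c ≠ ⊥ := by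
  intro hbot
  refine hc (eq_zero_of_killingForm_rootSpace_eq_zero H fun χ y hy ↦ ?_)
  by_contra hcy
  have hχ := mem_supportSpan hy hcy
  rw [hbot, Submodule.mem_bot] at hχ
  subst hχ
  have hyH : y ∈ H.toLieSubmodule := rootSpace_zero_eq k L H ▸ hy
  exact hcy (DFunLike.congr_fun hcH ⟨y, hyH⟩)

lemma supportSpan_mem_invtSubmodule_reflection
    (h : ∀ β : Dual k H, β ∉ supportSpan H c → ∀ e ∈ rootSpace H β, ⁅e, c⁆ = 0) (i : H.root) :
    supportSpan H c ∈ Module.End.invtSubmodule ((rootSystem H).reflection i).toLinearMap := by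
  rw [Module.End.mem_invtSubmodule]
  intro χ hχ
  rw [Submodule.mem_comap, LinearEquiv.coe_coe, RootPairing.reflection_apply]
  by_cases hi : (rootSystem H).root i ∈ supportSpan H c
  · exact Submodule.sub_mem _ hχ (Submodule.smul_mem _ _ hi)
  obtain ⟨h', e, f, hef, he, hf⟩ := exists_isSl2Triple_of_weight_isNonZero (H.isNonZero_coe_root i)
  have lie_e_c : ⁅e, c⁆ = 0 := h _ hi e he
  have lie_f_c : ⁅f, c⁆ = 0 := h (-(rootSystem H).root i) (by rwa [Submodule.neg_mem_iff]) f hf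
  have lie_c_coroot : ⁅c, (coroot (i : Weight k H L) : L)⁆ = 0 := by
    rw [← hef.h_eq_coroot (H.isNonZero_coe_root i) he hf, ← hef.lie_e_f, leibniz_lie,
      ← lie_skew c e, ← lie_skew c f, lie_e_c, lie_f_c]
    simp
  have coroot_χ : (rootSystem H).coroot' i χ = 0 :=
    apply_eq_zero_of_mem_supportSpan lie_c_coroot hχ
  rwa [coroot_χ, zero_smul, sub_zero]

lemma exists_lie_ne_zero_of_supportSpan_ne_top [(rootSystem H).IsIrreducible] (hc : c ≠ 0)
    (hcH : cartanPart H c = 0) (hV : supportSpan H c ≠ ⊤) :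
    ∃ β : Dual k H, β ∉ supportSpan H c ∧ ∃ e ∈ rootSpace H β, ⁅e, c⁆ ≠ 0 := by
  by_contra! h
  exact hV (RootPairing.IsIrreducible.eq_top_of_invtSubmodule_reflection (P := rootSystem H) _
    (supportSpan_mem_invtSubmodule_reflection h) (supportSpan_ne_bot hc hcH))

lemma exists_conj_of_notMem_supportSpan {β : Dual k H} (hβ : β ∉ supportSpan H c)
    (he : e ∈ rootSpace H β) :
    ∃ φ : L ≃ₗ⁅k⁆ L, cartanPart H (φ c) = cartanPart H c ∧
      ∀ χ : Dual k H, ∀ y ∈ rootSpace H χ, (∀ n ≥ 2, n • β + χ ∉ supportSpan H c) →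
        killingForm k L (φ c) y = killingForm k L c y + killingForm k L c ⁅e, y⁆ := by
  have hβ₀ : β ≠ 0 := fun h ↦ hβ (h ▸ Submodule.zero_mem (supportSpan H c))
  obtain ⟨φ, hφ⟩ := exists_conj_of_mem_rootSpace hβ₀ he
  refine ⟨φ, ?_, fun χ y hy h ↦ (hφ c).2 y fun n hn ↦
    killingForm_eq_zero_of_notMem_supportSpan (h n hn) (toEnd_pow_apply_mem he hy n)⟩
  rw [(hφ c).1, killingForm_eq_zero_of_notMem_supportSpan hβ he, zero_smul, sub_zero]

lemma exists_supportSpan_lt [(rootSystem H).IsIrreducible] (hc : c ≠ 0)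
    (hcH : cartanPart H c = 0) (hV : supportSpan H c ≠ ⊤) :
    ∃ φ : L ≃ₗ⁅k⁆ L, cartanPart H (φ c) = 0 ∧ supportSpan H c < supportSpan H (φ c) := by
  obtain ⟨β, hβ, e, he, hec⟩ := exists_lie_ne_zero_of_supportSpan_ne_top hc hcH hV
  obtain ⟨φ, hφH, hφ⟩ := exists_conj_of_notMem_supportSpan hβ he
  refine ⟨φ, hφH.trans hcH, lt_of_le_not_ge ?_ fun hle ↦ ?_⟩
  · refine Submodule.span_le.2 ?_
    rintro χ ⟨y, hy, hcy⟩
    have hχ := mem_supportSpan hy hcy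
    refine mem_supportSpan hy ?_
    have hβχ : β + χ ∉ supportSpan H c := by
      simpa using nsmul_add_notMem hβ hχ one_ne_zero
    rwa [hφ χ y hy fun n hn ↦ nsmul_add_notMem hβ hχ (by omega),
      killingForm_eq_zero_of_notMem_supportSpan hβχ
        (lie_mem_genWeightSpace_of_mem_genWeightSpace he hy), add_zero]
  · obtain ⟨χ, y, hy, hcy⟩ : ∃ χ : Dual k H, ∃ y ∈ rootSpace H χ, killingForm k L c ⁅e, y⁆ ≠ 0 := by
      by_contra! h
      refine hec (eq_zero_of_killingForm_rootSpace_eq_zero H fun χ y hy ↦ ?_)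
      rw [traceForm_apply_lie_apply', h χ y hy, neg_zero]
    have hβχ : β + χ ∈ supportSpan H c :=
      mem_supportSpan (lie_mem_genWeightSpace_of_mem_genWeightSpace he hy) hcy
    have hχ : χ ∉ supportSpan H c := fun h ↦ hβ ((Submodule.add_mem_iff_left _ h).1 hβχ)
    refine hχ (hle (mem_supportSpan hy ?_))
    rw [hφ χ y hy, killingForm_eq_zero_of_notMem_supportSpan hχ hy, zero_add]
    · exact hcy
    · intro n hn
      obtain ⟨m, rfl⟩ := Nat.exists_eq_add_of_le' hn
      rw [show (m + 2) • β + χ = (m + 1) • β + (β + χ) by module]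
      exact nsmul_add_notMem hβ hβχ m.succ_ne_zero

lemma exists_supportSpan_eq_top [(rootSystem H).IsIrreducible] (hc : c ≠ 0)
    (hcH : cartanPart H c = 0) :
    ∃ φ : L ≃ₗ⁅k⁆ L, cartanPart H (φ c) = 0 ∧ supportSpan H (φ c) = ⊤ := by
  induction hV : supportSpan H c using WellFoundedGT.induction generalizing c with
  | ind V ih =>
    subst hV
    by_cases hV : supportSpan H c = ⊤
    · exact ⟨LieEquiv.refl, hcH, hV⟩
    obtain ⟨φ, hφH, hφ⟩ := exists_supportSpan_lt hc hcH hV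
    obtain ⟨ψ, hψ⟩ := ih _ hφ ((map_ne_zero_iff φ φ.injective).2 hc) hφH rfl
    exact ⟨φ.trans ψ, hψ⟩

lemma exists_forall_weight_apply_ne_zero (H : LieSubalgebra k L) [H.IsCartanSubalgebra]
    [IsTriangularizable k H L] : ∃ a : H, ∀ α : Weight k H L, α.IsNonZero → α a ≠ 0 := by
  obtain ⟨a, ha⟩ := Module.Dual.exists_forall_ne_zero_of_forall_exists
    (fun α : {α : Weight k H L // α.IsNonZero} ↦ α.1.toLinear)
    fun α ↦ ⟨coroot α.1, by simp [root_apply_coroot α.2]⟩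
  exact ⟨a, fun α hα ↦ ha ⟨α, hα⟩⟩

lemma mem_of_lie_eq_zero {a : H} (ha : ∀ α : Weight k H L, α.IsNonZero → α a ≠ 0) {x : L}
    (hax : ⁅(a : L), x⁆ = 0) : x ∈ H := by
  obtain ⟨u, hu⟩ := (cartanEquivDual H).surjective (cartanPart H x)
  have lie_u_a : ⁅(u : L), (a : L)⁆ = 0 := congrArg Subtype.val (trivial_lie_zero H H u a)
  have lie_sub_a : ⁅x - u, (a : L)⁆ = 0 := by
    rw [sub_lie, ← lie_skew, hax, lie_u_a, neg_zero, sub_zero]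
  suffices x - u = 0 from sub_eq_zero.1 this ▸ u.2
  refine eq_zero_of_killingForm_rootSpace_eq_zero H fun χ y hy ↦ ?_
  by_contra hxy
  have hχa : χ a = 0 := apply_eq_zero_of_mem_supportSpan lie_sub_a (mem_supportSpan hy hxy)
  rcases eq_or_ne χ 0 with rfl | hχ
  · have hyH : y ∈ H.toLieSubmodule := rootSpace_zero_eq k L H ▸ hy
    refine hxy ?_
    rw [map_sub, LinearMap.sub_apply, sub_eq_zero]
    exact (DFunLike.congr_fun hu ⟨y, hyH⟩).symm
  · have hy₀ : y ≠ 0 := by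
      rintro rfl
      exact hxy (map_zero _)
    refine ha ⟨χ, fun h ↦ hy₀ (by simpa [h] using hy)⟩ (fun h ↦ hχ ?_) hχa
    exact DFunLike.coe_injective h

lemma isSubmersiveBracket_of_supportSpan_eq_top (hcH : cartanPart H c = 0)
    (hV : supportSpan H c = ⊤) : IsSubmersiveBracket c := by
  obtain ⟨a, ha⟩ := exists_forall_weight_apply_ne_zero H
  obtain ⟨b, hb⟩ : c ∈ LinearMap.range (ad k L a) := by
    rw [← orthogonal_ker_ad, LinearMap.BilinForm.mem_orthogonal_iff]
    intro x hx
    rw [traceForm_comm]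
    exact DFunLike.congr_fun hcH ⟨x, mem_of_lie_eq_zero ha hx⟩
  refine ⟨a, b, hb.symm, fun x hax hbx ↦ ?_⟩
  have hcx : ⁅c, x⁆ = 0 := by
    rw [← hb, ad_apply, lie_lie, hax, hbx, lie_zero, lie_zero, sub_zero]
  have hx : (⟨x, mem_of_lie_eq_zero ha hax⟩ : H) = 0 :=
    (Module.forall_dual_apply_eq_zero_iff k _).1 fun χ ↦
      apply_eq_zero_of_mem_supportSpan hcx (hV ▸ Submodule.mem_top)
  exact congrArg Subtype.val hx

theorem isSubmersiveBracket_of_ne_zero (H : LieSubalgebra k L) [H.IsCartanSubalgebra]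
    [IsTriangularizable k H L] [(rootSystem H).IsIrreducible] (hc : c ≠ 0) :
    IsSubmersiveBracket c := by
  obtain ⟨φ, hφ⟩ := exists_cartanPart_eq_zero H c
  obtain ⟨ψ, hψH, hψ⟩ := exists_supportSpan_eq_top ((map_ne_zero_iff φ φ.injective).2 hc) hφ
  simpa using (isSubmersiveBracket_of_supportSpan_eq_top hψH hψ).map (φ.trans ψ).symm

end SplitKilling

end BracketWidth

open BracketWidth in
theorem width_one_iff_condition_star_general
    (k : Type*) [Field k] [CharZero k]
    (𝔤 : Type*) [LieRing 𝔤] [LieAlgebra k 𝔤] [FiniteDimensional k 𝔤] [LieAlgebra.IsSimple k 𝔤]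
    (H : LieSubalgebra k 𝔤) [H.IsCartanSubalgebra] [LieModule.IsTriangularizable k H 𝔤] :
    (∀ z : PowerSeries k ⊗[k] 𝔤, ∃ x y : PowerSeries k ⊗[k] 𝔤, z = ⁅x, y⁆) ∧
      (∀ c : 𝔤, c ≠ 0 → ∃ a b : 𝔤, c = ⁅a, b⁆ ∧
        ∀ x : 𝔤, ⁅a, x⁆ = 0 → ⁅b, x⁆ = 0 → x = 0) :=
  have condition_star (c : 𝔤) (hc : c ≠ 0) : IsSubmersiveBracket c :=
    isSubmersiveBracket_of_ne_zero H hc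
  ⟨exists_eq_lie_of_forall_isSubmersiveBracket condition_star, condition_star⟩

/-- The current Lie algebra `𝔤 ⊗ k[[t]]` has bracket width 1 (every element is a single
Lie bracket) if and only if `𝔤` satisfies condition (*): every nonzero `c ∈ 𝔤` is a
bracket `c = ⁅a, b⁆` of elements with trivial common centralizer. -/
theorem width_one_iff_condition_star
    (k : Type*) [Field k] [IsAlgClosed k] [CharZero k]
    (𝔤 : Type*) [LieRing 𝔤] [LieAlgebra k 𝔤] [FiniteDimensional k 𝔤]
    [LieAlgebra.IsSimple k 𝔤] :
    (∀ z : PowerSeries k ⊗[k] 𝔤, ∃ x y : PowerSeries k ⊗[k] 𝔤, z = ⁅x, y⁆) ↔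
      (∀ c : 𝔤, c ≠ 0 → ∃ a b : 𝔤, c = ⁅a, b⁆ ∧
        ∀ x : 𝔤, ⁅a, x⁆ = 0 → ⁅b, x⁆ = 0 → x = 0) := by
  obtain ⟨a, ha⟩ := LieAlgebra.exists_isCartanSubalgebra_engel k 𝔤
  obtain ⟨hwidth, hstar⟩ :=
    width_one_iff_condition_star_general k 𝔤 (LieSubalgebra.engel k a)
  exact iff_of_true hwidth hstar
end

section
/- Let k be an algebraically closed field of characteristic zero. Every element z of the current Lie algebra sl₂(k) ⊗ k[[t]] can be written as a single Lie bracket: there exist x, y ∈ sl₂(k) ⊗ k[[t]] with z = [x, y]. (Thus the bracket width of sl₂(k) ⊗ k[[t]] is 1.) -/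
/-!
Over a Bézout domain `R` every vector of `R³` is a cross product: if `(a, b) = g • (a', b')` with
`u a' + v b' = 1`, then `(a, b, c)` is orthogonal to `(b', -a', 0)` and `(u c, v c, -g)`, and
equals their cross product. In the coordinates of an `sl₂` triple the Lie bracket is a cross
product up to signs and factors of `2`, so it is surjective as soon as `2` is invertible. Both
conditions hold for the principal ideal domain `k[[t]]`, over which `k[[t]] ⊗ sl₂(k)` is spanned by
the base change of the standard triple.
-/

open scoped TensorProduct Matrix

theorem exists_isCoprime_eq_mul {R : Type*} [CommRing R] [IsDomain R] [IsBezout R] (a b : R) :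
    ∃ g a' b', IsCoprime a' b' ∧ a = g * a' ∧ b = g * b' := by
  classical
  let := IsBezout.toGCDDomain R
  obtain ⟨a', b', ha, hb, hgcd⟩ := extract_gcd a b
  exact ⟨gcd a b, a', b', (gcd_isUnit_iff a' b').mp hgcd, ha, hb⟩

theorem exists_crossProduct_eq {R : Type*} [CommRing R] [IsDomain R] [IsBezout R]
    (w : Fin 3 → R) : ∃ x y : Fin 3 → R, x ⨯₃ y = w := by
  obtain ⟨g, a, b, ⟨u, v, huv⟩, ha, hb⟩ := exists_isCoprime_eq_mul (w 0) (w 1)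
  refine ⟨![b, -a, 0], ![u * w 2, v * w 2, -g], ?_⟩
  rw [cross_apply]
  ext i
  fin_cases i
  · simp [ha, mul_comm]
  · simp [hb, mul_comm]
  · change b * (v * w 2) - -a * (u * w 2) = w 2
    linear_combination w 2 * huv

section Sl2Triple

variable {R L : Type*} [CommRing R] [LieRing L] [LieAlgebra R L] {h e f : L}

theorem lie_eq_crossProduct_of_isSl2Triple (t : IsSl2Triple h e f) (v w : Fin 3 → R) :
    ⁅v 0 • e + v 1 • h + v 2 • f, w 0 • e + w 1 • h + w 2 • f⁆ =
      (2 * (w ⨯₃ v) 2) • e + (w ⨯₃ v) 1 • h + (2 * (w ⨯₃ v) 0) • f := by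
  have lie_e_h : ⁅e, h⁆ = -((2 : R) • e) := by rw [← lie_skew, t.lie_h_e_smul R]
  have lie_f_h : ⁅f, h⁆ = (2 : R) • f := by rw [← lie_skew, t.lie_lie_smul_f R, neg_neg]
  have lie_f_e : ⁅f, e⁆ = -h := by rw [← lie_skew, t.lie_e_f]
  simp only [add_lie, lie_add, smul_lie, lie_smul, lie_self, t.lie_e_f, t.lie_h_e_smul R,
    t.lie_lie_smul_f R, lie_e_h, lie_f_h, lie_f_e, cross_apply, Matrix.cons_val]
  module

theorem exists_eq_lie_of_isSl2Triple [IsDomain R] [IsBezout R] (h2 : IsUnit (2 : R))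
    (t : IsSl2Triple h e f) (span_eq_top : Submodule.span R {e, h, f} = ⊤) (z : L) :
    ∃ x y : L, z = ⁅x, y⁆ := by
  obtain ⟨a, b, c, rfl⟩ := Submodule.mem_span_triple.mp (span_eq_top ▸ Submodule.mem_top (x := z))
  obtain ⟨a, rfl⟩ := h2.dvd (a := a)
  obtain ⟨c, rfl⟩ := h2.dvd (a := c)
  obtain ⟨w, v, hwv⟩ := exists_crossProduct_eq ![c, b, a]
  refine ⟨_, _, ((lie_eq_crossProduct_of_isSl2Triple t v w).trans ?_).symm⟩
  simp [hwv]

end Sl2Triple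

section BaseChange

theorem one_tmul_ne_zero_of_dual_apply_eq_one {k M : Type*} (A : Type*) [CommSemiring k]
    [Semiring A] [Nontrivial A] [Algebra k A] [AddCommMonoid M] [Module k M] {m : M}
    (φ : Module.Dual k M) (hφ : φ m = 1) : (1 : A) ⊗ₜ[k] m ≠ 0 := by
  intro hm
  simpa [hφ] using congrArg (TensorProduct.rid k A ∘ φ.lTensor A) hm

theorem span_image_one_tmul_eq_top {k M : Type*} (A : Type*) [CommSemiring k] [Semiring A]
    [Algebra k A] [AddCommMonoid M] [Module k M] {s : Set M} (hs : Submodule.span k s = ⊤) :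
    Submodule.span A (((1 : A) ⊗ₜ[k] ·) '' s) = ⊤ := by
  rw [← Submodule.baseChange_top, ← hs, Submodule.baseChange_span]
  rfl

theorem isSl2Triple_one_tmul {k L : Type*} (A : Type*) [CommRing k] [CommRing A] [Algebra k A]
    [LieRing L] [LieAlgebra k L] {h e f : L} (t : IsSl2Triple h e f)
    (h_ne_zero : (1 : A) ⊗ₜ[k] h ≠ 0) :
    IsSl2Triple ((1 : A) ⊗ₜ[k] h) ((1 : A) ⊗ₜ[k] e) ((1 : A) ⊗ₜ[k] f) where
  h_ne_zero := h_ne_zero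
  lie_e_f := by simp [t.lie_e_f]
  lie_h_e_nsmul := by simp [t.lie_h_e_nsmul]
  lie_h_f_nsmul := by simp [t.lie_h_f_nsmul, TensorProduct.tmul_neg]

end BaseChange

section SpecialLinear

open LieAlgebra.SpecialLinear

section

variable {k n : Type*} [CommRing k] [Fintype n] [DecidableEq n] {i j : n}

theorem one_tmul_singleSubSingle_ne_zero (A : Type*) [CommRing A] [Nontrivial A] [Algebra k A]
    (hij : i ≠ j) : (1 : A) ⊗ₜ[k] (singleSubSingle i j 1 : sl n k) ≠ 0 := by
  let diagEntry : Module.Dual k (sl n k) :=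
    { toFun := fun m ↦ m.val i i, map_add' := fun _ _ ↦ rfl, map_smul' := fun _ _ ↦ rfl }
  have diagEntry_eq_one : diagEntry (singleSubSingle i j 1) = 1 := by
    change (singleSubSingle i j 1 : sl n k).val i i = 1
    simp [hij.symm]
  exact one_tmul_ne_zero_of_dual_apply_eq_one A diagEntry diagEntry_eq_one

theorem isSl2Triple_singleSubSingle [Nontrivial k] (hij : i ≠ j) :
    IsSl2Triple (singleSubSingle i j 1 : sl n k) (single i j hij 1) (single j i hij.symm 1) where
  h_ne_zero := fun h ↦ one_tmul_singleSubSingle_ne_zero k hij (by rw [h, TensorProduct.tmul_zero])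
  lie_e_f := by ext : 1; rw [sl_bracket]; simp
  lie_h_e_nsmul := by
    ext : 1; rw [sl_bracket]; simp [sub_mul, mul_sub, two_smul, hij.symm]
  lie_h_f_nsmul := by
    ext : 1; rw [sl_bracket]; simp [sub_mul, mul_sub, two_smul, hij, ← sub_eq_add_neg]

end

theorem span_sl_fin_two_eq_top (k : Type*) [CommRing k] :
    Submodule.span k {single 0 1 zero_ne_one 1, singleSubSingle 0 1 1,
      (single 1 0 one_ne_zero 1 : sl (Fin 2) k)} = ⊤ := by
  refine eq_top_iff.mpr fun m _ ↦ Submodule.mem_span_triple.mpr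
    ⟨m.val 0 1, m.val 0 0, m.val 1 0, ?_⟩
  have trace_eq_zero : m.val 0 0 + m.val 1 1 = 0 := by
    simpa [Matrix.trace_fin_two] using LinearMap.mem_ker.mp m.property
  ext i j
  fin_cases i <;> fin_cases j
  · simp
  · simp
  · simp
  · simpa using neg_eq_of_add_eq_zero_right trace_eq_zero

end SpecialLinear

open LieAlgebra.SpecialLinear in
theorem sl2_powerSeries_width_one_general {k A : Type*} [CommRing k] [CommRing A] [IsDomain A]
    [IsBezout A] [Algebra k A] (h2 : IsUnit (2 : A)) (z : A ⊗[k] sl (Fin 2) k) :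
    ∃ x y : A ⊗[k] sl (Fin 2) k, z = ⁅x, y⁆ := by
  have : Nontrivial k := (algebraMap k A).domain_nontrivial
  have triple := isSl2Triple_one_tmul A (isSl2Triple_singleSubSingle (k := k) zero_ne_one)
    (one_tmul_singleSubSingle_ne_zero A (zero_ne_one (α := Fin 2)))
  have span_eq_top := span_image_one_tmul_eq_top A (span_sl_fin_two_eq_top k)
  simp only [Set.image_insert_eq, Set.image_singleton] at span_eq_top
  exact exists_eq_lie_of_isSl2Triple h2 triple span_eq_top z

/-- Every element of the current Lie algebra `sl₂(k) ⊗ k[[t]]` is a single Lie bracket. -/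
theorem sl2_powerSeries_width_one
    (k : Type*) [Field k] [IsAlgClosed k] [CharZero k]
    (z : PowerSeries k ⊗[k] (LieAlgebra.SpecialLinear.sl (Fin 2) k)) :
    ∃ x y : PowerSeries k ⊗[k] (LieAlgebra.SpecialLinear.sl (Fin 2) k), z = ⁅x, y⁆ :=
  sl2_powerSeries_width_one_general
    (map_ofNat (algebraMap k (PowerSeries k)) 2 ▸ (IsUnit.mk0 (2 : k) two_ne_zero).map _) z
end
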